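/- arXiv:1404.3438 — 3 statements merged into one kernel-verified Lean document; each statement's English description precedes it below -/
import Mathlib

section
/- Let 0 < γ < 1, let c be a Bernoulli(γ) random variable (P(c = 1) = γ, P(c = 0) = 1 − γ), and let a be a real random variable independent of c with E[a] = λ, where 0 < λ < γ, and with E[e^{−θa}] < ∞ for every θ ∈ ℝ. Then the rate function Φ₁ = sup_{θ∈ℝ} { −log E[e^{θ(c − a)}] } satisfies Φ₁ ≤ λ log(λ/γ) + (1 − λ) log((1 − λ)/(1 − γ)); i.e., the decay rate is maximized, among injection distributions with mean λ, by the constant injection a ≡ λ. -/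
open Real MeasureTheory ProbabilityTheory

/-!
By independence, `-log E[e^{θ(c - a)}] = -log E[e^{-θa}] - log E[e^{θc}]`. Jensen's inequality
bounds the first term by `θλ`, its value for the constant injection `a ≡ λ`. What remains,
`θλ - log E[e^{θc}]`, is at most the relative entropy `D(λ‖γ)`: the gap is `D(λ‖γ_θ) ≥ 0`, where
`γ_θ = γe^θ / (γe^θ + 1 - γ)` is the parameter of the exponentially tilted Bernoulli law.
-/

section CumulantGeneratingFunction

variable {Ω : Type*} [MeasurableSpace Ω] {μ : Measure Ω} {X Y : Ω → ℝ} {t : ℝ}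

lemma mul_integral_le_cgf [IsProbabilityMeasure μ] (hX : Integrable X μ)
    (hexp : Integrable (fun ω => exp (t * X ω)) μ) :
    t * ∫ ω, X ω ∂μ ≤ cgf X μ t := by
  have jensen : exp (∫ ω, t * X ω ∂μ) ≤ mgf X μ t :=
    convexOn_exp.map_integral_le continuous_exp.continuousOn isClosed_univ
      (.of_forall fun _ => Set.mem_univ _) (hX.const_mul t) hexp
  rwa [integral_const_mul, ← le_log_iff_exp_le (mgf_pos hexp)] at jensen

lemma cgf_sub_of_indepFun (hindep : IndepFun X Y μ)
    (hX : Integrable (fun ω => exp (t * X ω)) μ) (hY : Integrable (fun ω => exp (-t * Y ω)) μ) :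
    cgf (X - Y) μ t = cgf X μ t + cgf Y μ (-t) := by
  have hindep' : IndepFun X (-Y) μ := hindep.comp measurable_id measurable_neg
  rw [sub_eq_add_neg, hindep'.cgf_add hX (by simpa using hY), cgf_neg]

lemma neg_cgf_sub_le_mul_integral_sub_cgf [IsProbabilityMeasure μ] (hindep : IndepFun X Y μ)
    (hX : Integrable (fun ω => exp (t * X ω)) μ) (hY : Integrable Y μ)
    (hexpY : Integrable (fun ω => exp (-t * Y ω)) μ) :
    -cgf (X - Y) μ t ≤ t * ∫ ω, Y ω ∂μ - cgf X μ t := by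
  rw [cgf_sub_of_indepFun hindep hX hexpY]
  linarith [mul_integral_le_cgf hY hexpY]

end CumulantGeneratingFunction

section BernoulliLaw

lemma eq_bernoulliMeasure_of_singletons {α : Type*} [MeasurableSpace α]
    [MeasurableSingletonClass α] {ν : Measure α} [IsProbabilityMeasure ν] {x y : α} (hxy : x ≠ y)
    {p : unitInterval} (hx : ν {x} = ENNReal.ofReal p) (hy : ν {y} = ENNReal.ofReal (1 - p)) :
    ν = bernoulliMeasure x y p := by
  have hdisj : Disjoint {x} {y} := Set.disjoint_singleton.2 hxy
  have hsupport : ν ({x} ∪ {y}) = 1 := by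
    rw [measure_union hdisj (measurableSet_singleton y), hx, hy,
      ← ENNReal.ofReal_add p.2.1 (sub_nonneg.2 p.2.2), add_sub_cancel, ENNReal.ofReal_one]
  have hae : ∀ᵐ z ∂ν, z ∈ ({x} ∪ {y} : Set α) := by
    rw [ae_mem_iff_measure_eq (by measurability), hsupport, measure_univ]
  rw [← Measure.restrict_eq_self_of_ae_mem hae,
    Measure.restrict_union hdisj (measurableSet_singleton y), Measure.restrict_singleton,
    Measure.restrict_singleton, hx, hy, ENNReal.ofReal_eq_coe_nnreal p.2.1,
    ENNReal.ofReal_eq_coe_nnreal (sub_nonneg.2 p.2.2)]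
  rfl

lemma hasLaw_bernoulliMeasure_of_measure_eq {Ω α : Type*} [MeasurableSpace Ω] [MeasurableSpace α]
    [MeasurableSingletonClass α] {μ : Measure Ω} [IsProbabilityMeasure μ] {X : Ω → α} {x y : α}
    (hxy : x ≠ y) {p : unitInterval} (hX : AEMeasurable X μ)
    (hx : μ {ω | X ω = x} = ENNReal.ofReal p) (hy : μ {ω | X ω = y} = ENNReal.ofReal (1 - p)) :
    HasLaw X (bernoulliMeasure x y p) μ where
  aemeasurable := hX
  map_eq := by
    have := Measure.isProbabilityMeasure_map hX
    apply eq_bernoulliMeasure_of_singletons hxy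
    · rw [Measure.map_apply_of_aemeasurable hX (measurableSet_singleton x)]
      exact hx
    · rw [Measure.map_apply_of_aemeasurable hX (measurableSet_singleton y)]
      exact hy

variable {Ω : Type*} [MeasurableSpace Ω] {μ : Measure Ω} {X : Ω → ℝ} {p : unitInterval}

lemma integrable_exp_mul_of_hasLaw_bernoulliMeasure {x y : ℝ}
    (hX : HasLaw X (bernoulliMeasure x y p) μ) (t : ℝ) :
    Integrable (fun ω => exp (t * X ω)) μ := by
  have h := integrable_bernoulliMeasure x y p fun z => exp (t * z)
  rw [← hX.map_eq] at h
  exact h.comp_aemeasurable hX.aemeasurable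

lemma cgf_of_hasLaw_bernoulliMeasure (hX : HasLaw X (bernoulliMeasure 1 0 p) μ) (t : ℝ) :
    cgf X μ t = log (p * exp t + (1 - p)) := by
  rw [cgf, ← mgf_id_map hX.aemeasurable, hX.map_eq, mgf, integral_bernoulliMeasure]
  simp

end BernoulliLaw

section BernoulliRelativeEntropy

/-- The relative entropy `D(p‖q)` of the Bernoulli law of parameter `p` with respect to the one of
parameter `q`. For `0 < q < 1`, the values at `p = 0` and `p = 1` are the usual ones, with
`0 log 0 = 0`. -/
noncomputable def bernoulliKL (p q : ℝ) : ℝ :=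
  p * log (p / q) + (1 - p) * log ((1 - p) / (1 - q))

variable {p q : ℝ}

lemma bernoulliKL_nonneg (hp0 : 0 ≤ p) (hp1 : p ≤ 1) (hq0 : 0 < q) (hq1 : q < 1) :
    0 ≤ bernoulliKL p q := by
  have hp' : 0 ≤ 1 - p := sub_nonneg.2 hp1
  have hq' : 0 < 1 - q := sub_pos.2 hq1
  have hsum : bernoulliKL p q = q * InformationTheory.klFun (p / q)
      + (1 - q) * InformationTheory.klFun ((1 - p) / (1 - q)) := by
    simp only [bernoulliKL, InformationTheory.klFun_apply]
    field_simp
    ring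
  rw [hsum]
  have hklp := InformationTheory.klFun_nonneg (div_nonneg hp0 hq0.le)
  have hklp' := InformationTheory.klFun_nonneg (div_nonneg hp' hq'.le)
  positivity

/-- The parameter of the Bernoulli law of parameter `q` after exponential tilting by `t`, that is,
after reweighting by the density proportional to `x ↦ e^{tx}` on `{0, 1}`. -/
noncomputable def tiltedParam (q t : ℝ) : ℝ :=
  q * exp t / (q * exp t + (1 - q))

lemma mul_exp_add_one_sub_pos (hq0 : 0 < q) (hq1 : q < 1) (t : ℝ) :
    0 < q * exp t + (1 - q) :=
  add_pos (mul_pos hq0 (exp_pos t)) (sub_pos.2 hq1)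

lemma one_sub_tiltedParam (hq0 : 0 < q) (hq1 : q < 1) (t : ℝ) :
    1 - tiltedParam q t = (1 - q) / (q * exp t + (1 - q)) := by
  rw [tiltedParam, one_sub_div (mul_exp_add_one_sub_pos hq0 hq1 t).ne', add_sub_cancel_left]

lemma tiltedParam_pos (hq0 : 0 < q) (hq1 : q < 1) (t : ℝ) : 0 < tiltedParam q t :=
  div_pos (mul_pos hq0 (exp_pos t)) (mul_exp_add_one_sub_pos hq0 hq1 t)

lemma tiltedParam_lt_one (hq0 : 0 < q) (hq1 : q < 1) (t : ℝ) : tiltedParam q t < 1 := by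
  rw [← sub_pos, one_sub_tiltedParam hq0 hq1]
  exact div_pos (sub_pos.2 hq1) (mul_exp_add_one_sub_pos hq0 hq1 t)

lemma mul_log_div_eq_add_mul_log_div {x y z : ℝ} (hy : y ≠ 0) (hz : z ≠ 0) :
    x * log (x / y) = x * log (x / z) + x * log (z / y) := by
  rcases eq_or_ne x 0 with rfl | hx
  · simp
  · rw [← mul_add, ← log_mul (div_ne_zero hx hz) (div_ne_zero hz hy), div_mul_div_cancel₀ hz]

lemma bernoulliKL_eq_bernoulliKL_tiltedParam_add (hq0 : 0 < q) (hq1 : q < 1) (p t : ℝ) :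
    bernoulliKL p q =
      bernoulliKL p (tiltedParam q t) + (t * p - log (q * exp t + (1 - q))) := by
  have hq' : 1 - q ≠ 0 := (sub_pos.2 hq1).ne'
  have hm : q * exp t + (1 - q) ≠ 0 := (mul_exp_add_one_sub_pos hq0 hq1 t).ne'
  have hlog_one : log (tiltedParam q t / q) = t - log (q * exp t + (1 - q)) := by
    rw [tiltedParam, div_right_comm, mul_div_cancel_left₀ _ hq0.ne', log_div (exp_ne_zero t) hm,
      log_exp]
  have hlog_zero : log ((1 - tiltedParam q t) / (1 - q)) = -log (q * exp t + (1 - q)) := by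
    rw [one_sub_tiltedParam hq0 hq1, div_right_comm, div_self hq', one_div, log_inv]
  rw [bernoulliKL, mul_log_div_eq_add_mul_log_div hq0.ne' (tiltedParam_pos hq0 hq1 t).ne',
    mul_log_div_eq_add_mul_log_div hq' (sub_pos.2 (tiltedParam_lt_one hq0 hq1 t)).ne',
    hlog_one, hlog_zero, bernoulliKL]
  ring

lemma mul_sub_log_le_bernoulliKL (hp0 : 0 ≤ p) (hp1 : p ≤ 1) (hq0 : 0 < q) (hq1 : q < 1) (t : ℝ) :
    t * p - log (q * exp t + (1 - q)) ≤ bernoulliKL p q := by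
  rw [bernoulliKL_eq_bernoulliKL_tiltedParam_add hq0 hq1 p t]
  exact le_add_of_nonneg_left <|
    bernoulliKL_nonneg hp0 hp1 (tiltedParam_pos hq0 hq1 t) (tiltedParam_lt_one hq0 hq1 t)

end BernoulliRelativeEntropy

/-- A bound for each `θ` also shows that the supremum over `θ` is taken over a bounded set, where
the real-valued `⨆` is not the junk value `0`. -/
theorem statement2_general {Ω : Type*} [MeasurableSpace Ω] {μ : Measure Ω} [IsProbabilityMeasure μ]
    {γ lam θ : ℝ} (hγ0 : 0 < γ) (hγ1 : γ < 1) (hlam0 : 0 ≤ lam) (hlam1 : lam ≤ 1) {c a : Ω → ℝ}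
    (hc : AEMeasurable c μ) (hc1 : μ {ω | c ω = 1} = ENNReal.ofReal γ)
    (hc0 : μ {ω | c ω = 0} = ENNReal.ofReal (1 - γ)) (hindep : IndepFun a c μ)
    (ha : Integrable a μ) (hmean : ∫ ω, a ω ∂μ = lam)
    (hmgf : Integrable (fun ω => exp (-θ * a ω)) μ) :
    -log (∫ ω, exp (θ * (c ω - a ω)) ∂μ) ≤
      lam * log (lam / γ) + (1 - lam) * log ((1 - lam) / (1 - γ)) := by
  let p : unitInterval := ⟨γ, hγ0.le, hγ1.le⟩
  have hlaw : HasLaw c (bernoulliMeasure 1 0 p) μ :=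
    hasLaw_bernoulliMeasure_of_measure_eq one_ne_zero hc hc1 hc0
  calc -cgf (c - a) μ θ
      ≤ θ * ∫ ω, a ω ∂μ - cgf c μ θ :=
        neg_cgf_sub_le_mul_integral_sub_cgf hindep.symm
          (integrable_exp_mul_of_hasLaw_bernoulliMeasure hlaw θ) ha hmgf
    _ = θ * lam - log (γ * exp θ + (1 - γ)) := by
        rw [hmean, cgf_of_hasLaw_bernoulliMeasure hlaw]
    _ ≤ bernoulliKL lam γ := mul_sub_log_le_bernoulliKL hlam0 hlam1 hγ0 hγ1 θ

/-- Among i.i.d. injection processes with mean `λ`, the decay rate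
`Φ₁ = sup_θ { −log E[e^{θ(c − a)}] }` of the decoding interval, where `c` is Bernoulli(`γ`)
independent of the injection `a`, is at most the Bernoulli KL divergence
`λ log(λ/γ) + (1 − λ) log((1 − λ)/(1 − γ))`, which is achieved by the constant
injection `a ≡ λ`. -/
theorem statement2 {Ω : Type*} [MeasureSpace Ω] [IsProbabilityMeasure (ℙ : Measure Ω)]
    (γ lam : ℝ) (hγ1 : γ < 1) (hlam : 0 < lam) (hlt : lam < γ)
    (c a : Ω → ℝ) (hc : Measurable c) (ha : Measurable a)
    (hc1 : ℙ {ω | c ω = 1} = ENNReal.ofReal γ)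
    (hc0 : ℙ {ω | c ω = 0} = ENNReal.ofReal (1 - γ))
    (hindep : IndepFun a c)
    (hmean : ∫ ω, a ω = lam)
    (hmgf : ∀ θ : ℝ, Integrable (fun ω => Real.exp (-θ * a ω))) :
    (⨆ θ : ℝ, -Real.log (∫ ω, Real.exp (θ * (c ω - a ω)))) ≤
      lam * Real.log (lam / γ) + (1 - lam) * Real.log ((1 - lam) / (1 - γ)) := by
  have ha_int : Integrable a := .of_integral_ne_zero (hmean ▸ hlam.ne')
  exact ciSup_le fun θ => statement2_general (hlam.trans hlt) hγ1 hlam.le (hlt.trans hγ1).le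
    hc.aemeasurable hc1 hc0 hindep ha_int hmean (hmgf θ)
end

section
/- Let Φ > 0 and C > 0 be real numbers, and let p, d : ℕ → ℝ be sequences with 0 ≤ p(k) ≤ 1 for all k, −lim_{b→∞} (1/b) log p(b) = Φ, and C·p(k) ≤ d(k) ≤ C·( k·p(k) + Σ_{b=k}^{∞} p(b) ) for all k (the series converging). Then −lim_{k→∞} (1/k) log d(k) = Φ. -/
open Real Filter

/-!
Writing `t k = ∑_{b ≥ k} p b`, the inequality `p k ≤ t k` turns the upper bound on `d` into
`d k ≤ C (k + 1) t k`, and the factors `C` and `k + 1` are subexponential. So everything reduces to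
showing that `t` decays at the same rate as `p`. It decays no faster because `p ≤ t`. It decays no
slower because, for every positive `a` below the rate of `p`, the geometric series gives
`t k ≤ e^{-ak} / (1 - e^{-a})` for large `k`; negative `a` are covered by `t k → 0`.
-/

/-- The sequence `u` decays exponentially at rate `r`: if `u` is eventually positive, this says
`u k = e^{-(r + o(1)) k}`. As `Real.log 0 = 0`, the zero sequence has rate `0` rather than `∞`. -/
def HasExpDecayRate (u : ℕ → ℝ) (r : ℝ) : Prop :=
  Tendsto (fun k : ℕ => -(1 / (k : ℝ)) * Real.log (u k)) atTop (nhds r)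

lemma neg_one_div_mul_log_le (k : ℕ) {x y : ℝ} (hx : 0 < x) (hxy : x ≤ y) :
    -(1 / (k : ℝ)) * Real.log y ≤ -(1 / (k : ℝ)) * Real.log x :=
  mul_le_mul_of_nonpos_left (Real.log_le_log hx hxy) (neg_nonpos.2 (by positivity))

lemma hasExpDecayRate_const (c : ℝ) : HasExpDecayRate (fun _ => c) 0 := by
  refine (tendsto_const_div_atTop_nhds_zero_nat (-Real.log c)).congr fun k => ?_
  ring

lemma hasExpDecayRate_natCast_add_one : HasExpDecayRate (fun k => (k : ℝ) + 1) 0 := by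
  have hlog : Tendsto (fun x : ℝ => Real.log x ^ 1 / (1 * x + -1)) atTop (nhds 0) :=
    Real.tendsto_pow_log_div_mul_add_atTop 1 (-1) 1 one_ne_zero
  have hsucc : Tendsto (fun k : ℕ => (k : ℝ) + 1) atTop atTop :=
    tendsto_atTop_add_const_right _ 1 tendsto_natCast_atTop_atTop
  have hneg := (hlog.comp hsucc).neg
  rw [neg_zero] at hneg
  refine hneg.congr fun k => ?_
  simp only [Function.comp_apply, one_mul, pow_one, add_neg_cancel_right]
  ring

lemma hasExpDecayRate_exp_neg_mul (a : ℝ) : HasExpDecayRate (fun k => Real.exp (-(a * k))) a := by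
  refine tendsto_const_nhds.congr' ?_
  filter_upwards [eventually_ne_atTop 0] with k hk
  rw [Real.log_exp]
  field_simp

namespace HasExpDecayRate

variable {u v w : ℕ → ℝ} {r s a : ℝ}

lemma eventually_ne_zero (hu : HasExpDecayRate u r) (hr : r ≠ 0) : ∀ᶠ k in atTop, u k ≠ 0 := by
  filter_upwards [hu.eventually_ne hr] with k hk huk
  simp [huk] at hk

lemma mul (hu : HasExpDecayRate u r) (hv : HasExpDecayRate v s)
    (hu0 : ∀ᶠ k in atTop, u k ≠ 0) (hv0 : ∀ᶠ k in atTop, v k ≠ 0) :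
    HasExpDecayRate (fun k => u k * v k) (r + s) := by
  refine (Tendsto.add hu hv).congr' ?_
  filter_upwards [hu0, hv0] with k huk hvk
  rw [Real.log_mul huk hvk, mul_add]

lemma const_mul (hu : HasExpDecayRate u r) (hu0 : ∀ᶠ k in atTop, u k ≠ 0) {c : ℝ} (hc : c ≠ 0) :
    HasExpDecayRate (fun k => c * u k) r := by
  simpa only [zero_add] using (hasExpDecayRate_const c).mul hu (.of_forall fun _ => hc) hu0

lemma eventually_le_exp (hu : HasExpDecayRate u r) (ha : a < r) :
    ∀ᶠ k in atTop, u k ≤ Real.exp (-(a * k)) := by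
  filter_upwards [hu.eventually_const_lt ha, eventually_gt_atTop 0] with k hak hk
  have hk' : (0 : ℝ) < k := Nat.cast_pos.2 hk
  have hlog : Real.log (u k) ≤ -(a * k) := by
    field_simp at hak
    linarith
  exact (Real.le_exp_log (u k)).trans (Real.exp_le_exp.2 hlog)

lemma eventually_lt_of_le (hv : HasExpDecayRate v r) (ha : a < r)
    (hu0 : ∀ᶠ k in atTop, 0 < u k) (huv : ∀ᶠ k in atTop, u k ≤ v k) :
    ∀ᶠ k : ℕ in atTop, a < -(1 / (k : ℝ)) * Real.log (u k) := by
  filter_upwards [hv.eventually_const_lt ha, hu0, huv] with k hak h0 h1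
  exact hak.trans_le (neg_one_div_mul_log_le k h0 h1)

lemma eventually_gt_of_ge (hu : HasExpDecayRate u r) (ha : r < a)
    (hu0 : ∀ᶠ k in atTop, 0 < u k) (huv : ∀ᶠ k in atTop, u k ≤ v k) :
    ∀ᶠ k : ℕ in atTop, -(1 / (k : ℝ)) * Real.log (v k) < a := by
  filter_upwards [hu.eventually_lt_const ha, hu0, huv] with k hak h0 h1
  exact (neg_one_div_mul_log_le k h0 h1).trans_lt hak

lemma squeeze (hu : HasExpDecayRate u r) (hw : HasExpDecayRate w r)
    (hu0 : ∀ᶠ k in atTop, 0 < u k) (huv : ∀ᶠ k in atTop, u k ≤ v k)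
    (hvw : ∀ᶠ k in atTop, v k ≤ w k) : HasExpDecayRate v r := by
  have hv0 : ∀ᶠ k in atTop, 0 < v k := by
    filter_upwards [hu0, huv] with k h0 h1 using h0.trans_le h1
  exact tendsto_order.2 ⟨fun a ha => hw.eventually_lt_of_le ha hv0 hvw,
    fun a ha => hu.eventually_gt_of_ge ha hu0 huv⟩

end HasExpDecayRate

lemma summable_shift {p : ℕ → ℝ} (hsum : Summable p) (k : ℕ) : Summable fun b => p (k + b) :=
  hsum.comp_injective (add_right_injective k)

lemma eventually_le_tsum_shift {p : ℕ → ℝ} (hsum : Summable p) (hp0 : ∀ᶠ k in atTop, 0 ≤ p k) :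
    ∀ᶠ k in atTop, p k ≤ ∑' b : ℕ, p (k + b) := by
  filter_upwards [eventually_forall_ge_atTop.2 hp0] with k hk
  exact (summable_shift hsum k).le_tsum 0 fun b _ => hk (k + b) (Nat.le_add_right k b)

lemma tsum_shift_le_of_le_exp {p : ℕ → ℝ} (hsum : Summable p) {a : ℝ} (ha : 0 < a) {k : ℕ}
    (h : ∀ b, k ≤ b → p b ≤ Real.exp (-(a * b))) :
    ∑' b : ℕ, p (k + b) ≤ (1 - Real.exp (-a))⁻¹ * Real.exp (-(a * k)) := by
  have hgeom : HasSum (fun b : ℕ => Real.exp (-a) ^ b * Real.exp (-(a * k)))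
      ((1 - Real.exp (-a))⁻¹ * Real.exp (-(a * k))) :=
    (hasSum_geometric_of_lt_one (Real.exp_pos _).le
      (Real.exp_lt_one_iff.2 (neg_lt_zero.2 ha))).mul_right _
  refine hasSum_le (fun b => ?_) (summable_shift hsum k).hasSum hgeom
  calc p (k + b) ≤ Real.exp (-(a * (k + b : ℕ))) := h _ (Nat.le_add_right k b)
    _ = Real.exp (-a) ^ b * Real.exp (-(a * k)) := by
      rw [← Real.exp_nat_mul, ← Real.exp_add]
      push_cast
      ring_nf

lemma tendsto_tsum_shift (p : ℕ → ℝ) : Tendsto (fun k => ∑' b : ℕ, p (k + b)) atTop (nhds 0) := by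
  simpa only [add_comm] using tendsto_sum_nat_add p

namespace HasExpDecayRate

variable {p : ℕ → ℝ} {r : ℝ}

lemma eventually_lt_tsum_shift (hp : HasExpDecayRate p r) (hsum : Summable p)
    (hpos : ∀ᶠ k in atTop, 0 < ∑' b : ℕ, p (k + b)) {s : ℝ} (hs : s < r) :
    ∀ᶠ k : ℕ in atTop, s < -(1 / (k : ℝ)) * Real.log (∑' b : ℕ, p (k + b)) := by
  rcases lt_or_ge s 0 with hs0 | hs0
  · have hle_one : ∀ᶠ k in atTop, ∑' b : ℕ, p (k + b) ≤ 1 :=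
      (tendsto_tsum_shift p).eventually_le_const one_pos
    exact (hasExpDecayRate_const 1).eventually_lt_of_le hs0 hpos hle_one
  · obtain ⟨a, hsa, har⟩ := exists_between hs
    have ha : 0 < a := hs0.trans_lt hsa
    have hM : (1 - Real.exp (-a))⁻¹ ≠ 0 :=
      inv_ne_zero (sub_pos.2 (Real.exp_lt_one_iff.2 (neg_lt_zero.2 ha))).ne'
    have hgeom : HasExpDecayRate (fun k => (1 - Real.exp (-a))⁻¹ * Real.exp (-(a * k))) a :=
      (hasExpDecayRate_exp_neg_mul a).const_mul (.of_forall fun _ => Real.exp_ne_zero _) hM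
    have hle : ∀ᶠ k : ℕ in atTop,
        ∑' b : ℕ, p (k + b) ≤ (1 - Real.exp (-a))⁻¹ * Real.exp (-(a * k)) := by
      filter_upwards [eventually_forall_ge_atTop.2 (hp.eventually_le_exp har)] with k hk
      exact tsum_shift_le_of_le_exp hsum ha hk
    exact hgeom.eventually_lt_of_le hsa hpos hle

theorem tsum_shift (hp : HasExpDecayRate p r) (hsum : Summable p)
    (hp0 : ∀ᶠ k in atTop, 0 < p k) : HasExpDecayRate (fun k => ∑' b : ℕ, p (k + b)) r := by
  have hle : ∀ᶠ k in atTop, p k ≤ ∑' b : ℕ, p (k + b) :=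
    eventually_le_tsum_shift hsum (hp0.mono fun _ => le_of_lt)
  have hpos : ∀ᶠ k in atTop, 0 < ∑' b : ℕ, p (k + b) := by
    filter_upwards [hp0, hle] with k h0 h1 using h0.trans_le h1
  exact tendsto_order.2 ⟨fun s hs => hp.eventually_lt_tsum_shift hsum hpos hs,
    fun s hs => hp.eventually_gt_of_ge hs hp0 hle⟩

end HasExpDecayRate

theorem statement10_general {r C : ℝ} (hC : 0 < C) {p d : ℕ → ℝ} (hsum : Summable p)
    (hp0 : ∀ᶠ k in atTop, 0 < p k) (hrate : HasExpDecayRate p r)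
    (hlow : ∀ᶠ k in atTop, C * p k ≤ d k)
    (hup : ∀ᶠ k in atTop, d k ≤ C * (k * p k + ∑' b : ℕ, p (k + b))) :
    HasExpDecayRate d r := by
  have hle : ∀ᶠ k in atTop, p k ≤ ∑' b : ℕ, p (k + b) :=
    eventually_le_tsum_shift hsum (hp0.mono fun _ => le_of_lt)
  have htail0 : ∀ᶠ k in atTop, ∑' b : ℕ, p (k + b) ≠ 0 := by
    filter_upwards [hp0, hle] with k h0 h1 using (h0.trans_le h1).ne'
  have hsucc0 : ∀ k : ℕ, (k : ℝ) + 1 ≠ 0 := Nat.cast_add_one_ne_zero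
  have hlower : HasExpDecayRate (fun k => C * p k) r :=
    hrate.const_mul (hp0.mono fun _ => ne_of_gt) hC.ne'
  have hupper : HasExpDecayRate (fun k => C * ((k + 1) * ∑' b : ℕ, p (k + b))) r := by
    have hprod := hasExpDecayRate_natCast_add_one.mul (hrate.tsum_shift hsum hp0)
      (.of_forall hsucc0) htail0
    rw [zero_add] at hprod
    exact hprod.const_mul (htail0.mono fun k hk => mul_ne_zero (hsucc0 k) hk) hC.ne'
  refine hlower.squeeze hupper (hp0.mono fun k => mul_pos hC) hlow ?_
  filter_upwards [hup, hle] with k hdk hk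
  calc d k ≤ C * (k * p k + ∑' b : ℕ, p (k + b)) := hdk
    _ ≤ C * (k * ∑' b : ℕ, p (k + b) + ∑' b : ℕ, p (k + b)) := by gcongr
    _ = C * ((k + 1) * ∑' b : ℕ, p (k + b)) := by ring

/-- Transfer lemma for decay rates: if `p` has exponential decay rate `Φ` and
`C·p(k) ≤ d(k) ≤ C·(k·p(k) + Σ_{b=k}^∞ p(b))`, then `d` has decay rate `Φ` too. -/
theorem statement10 (Φ C : ℝ) (hΦ : 0 < Φ) (hC : 0 < C) (p d : ℕ → ℝ)
    (hp0 : ∀ k, 0 ≤ p k) (hp1 : ∀ k, p k ≤ 1)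
    (hsum : Summable p)
    (hrate : Tendsto (fun b : ℕ => -(1 / (b : ℝ)) * Real.log (p b)) atTop (nhds Φ))
    (hlow : ∀ k : ℕ, C * p k ≤ d k)
    (hup : ∀ k : ℕ, d k ≤ C * ((k : ℝ) * p k + ∑' b : ℕ, p (k + b))) :
    Tendsto (fun k : ℕ => -(1 / (k : ℝ)) * Real.log (d k)) atTop (nhds Φ) :=
  statement10_general hC hsum
    ((HasExpDecayRate.eventually_ne_zero hrate hΦ.ne').mono fun k => (hp0 k).lt_of_ne')
    hrate (.of_forall hlow) (.of_forall hup)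
end

section
/- For all real numbers λ, γ with 0 < λ < γ < 1, the equation e^{λθ}(γe^{−θ} + 1 − γ) = 1 has exactly one solution θ = η with η > 0. -/
open Real

/-!
The moment generating function of a finitely supported law equals the total mass at `0` and has the
mean as its slope there. If some atom is positive, it is strictly convex and blows up at `+∞`.
If moreover the mean is negative, it dips below its initial value and climbs back through it,
exactly once by strict convexity. The Bernoulli queue increment has the atoms `lam - 1 < 0` and
`lam > 0` with masses `γ` and `1 - γ`, so its mean is `lam - γ < 0`.
-/

open Set Filter Topology

section StrictConvex

variable {f : ℝ → ℝ} {f' x T : ℝ}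

lemma eventually_lt_nhdsGT_of_hasDerivWithinAt_neg (hf : HasDerivWithinAt f f' (Ioi x) x)
    (hf' : f' < 0) : ∀ᶠ t in 𝓝[>] x, f t < f x := by
  have hslope := (hasDerivWithinAt_iff_tendsto_slope' self_notMem_Ioi).1 hf
  filter_upwards [hslope.eventually_lt_const hf', self_mem_nhdsWithin] with t ht hxt
  rw [slope_def_field, div_lt_iff₀ (sub_pos.2 hxt), zero_mul] at ht
  exact sub_neg.1 ht

lemma exists_gt_eq_of_convexOn_of_hasDerivWithinAt_neg (hf : ConvexOn ℝ (Ici x) f)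
    (hderiv : HasDerivWithinAt f f' (Ioi x) x) (hf' : f' < 0) (hxT : x < T) (hT : f x ≤ f T) :
    ∃ y, x < y ∧ f y = f x := by
  obtain ⟨t, hft, hxt, htT⟩ := ((eventually_lt_nhdsGT_of_hasDerivWithinAt_neg hderiv hf').and
    (Ioo_mem_nhdsGT hxT)).exists
  have hcont : ContinuousOn f (Ioi x) := interior_Ici (a := x) ▸ hf.continuousOn_interior
  obtain ⟨y, hy, hfy⟩ := intermediate_value_Icc htT.le
    (hcont.mono fun _ hz => hxt.trans_le hz.1) ⟨hft.le, hT⟩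
  exact ⟨y, hxt.trans_le hy.1, hfy⟩

lemma subsingleton_setOf_gt_eq_of_strictConvexOn (hf : StrictConvexOn ℝ (Ici x) f) :
    {y | x < y ∧ f y = f x}.Subsingleton := by
  have le_of_apply_eq {y z : ℝ} (hxy : x < y) (hfy : f y = f x) (hfz : f z = f x) : z ≤ y := by
    by_contra! hyz
    have hxz : x < z := hxy.trans hyz
    have hy : y ∈ openSegment ℝ x z := (openSegment_eq_Ioo hxz).ge ⟨hxy, hyz⟩
    have hlt := hf.lt_on_openSegment self_mem_Ici (mem_Ici.2 hxz.le) hxz.ne hy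
    rw [hfy, hfz, max_self] at hlt
    exact hlt.false
  rintro y ⟨hxy, hfy⟩ z ⟨hxz, hfz⟩
  exact le_antisymm (le_of_apply_eq hxz hfz hfy) (le_of_apply_eq hxy hfy hfz)

theorem existsUnique_gt_eq_of_strictConvexOn (hf : StrictConvexOn ℝ (Ici x) f)
    (hderiv : HasDerivWithinAt f f' (Ioi x) x) (hf' : f' < 0) (hxT : x < T) (hT : f x ≤ f T) :
    ∃! y, x < y ∧ f y = f x :=
  let ⟨y, hy⟩ := exists_gt_eq_of_convexOn_of_hasDerivWithinAt_neg hf.convexOn hderiv hf' hxT hT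
  ⟨y, hy, fun _ hz => subsingleton_setOf_gt_eq_of_strictConvexOn hf hz hy⟩

end StrictConvex

lemma convexOn_exp_const_mul (c : ℝ) : ConvexOn ℝ univ fun θ : ℝ => exp (c * θ) :=
  convexOn_exp.comp_linearMap (LinearMap.mulLeft ℝ c)

lemma strictConvexOn_exp_const_mul {c : ℝ} (hc : c ≠ 0) :
    StrictConvexOn ℝ univ fun θ : ℝ => exp (c * θ) :=
  (strictConvexOn_exp.subset (subset_univ _)
    (convex_univ.is_linear_image (LinearMap.mulLeft ℝ c).isLinear)).comp_convexOn
    ((LinearMap.mulLeft ℝ c).convexOn convex_univ) (exp_monotone.monotoneOn _)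
    (mul_right_injective₀ hc).injOn

/-- The moment generating function of the measure with mass `p i` at the point `x i` for `i ∈ s`.
The masses need not sum to `1`. -/
noncomputable def atomicMGF {ι : Type*} (s : Finset ι) (p x : ι → ℝ) (θ : ℝ) : ℝ :=
  ∑ i ∈ s, p i * exp (x i * θ)

namespace atomicMGF

variable {ι : Type*} {s : Finset ι} {p x : ι → ℝ} {j : ι}

lemma apply_zero (s : Finset ι) (p x : ι → ℝ) : atomicMGF s p x 0 = ∑ i ∈ s, p i := by
  simp [atomicMGF]

lemma strictConvexOn (hp : ∀ i ∈ s, 0 ≤ p i) (hj : j ∈ s) (hpj : 0 < p j) (hxj : x j ≠ 0) :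
    StrictConvexOn ℝ univ (atomicMGF s p x) := by
  refine ⟨convex_univ, fun u hu v hv huv a b ha hb hab => ?_⟩
  calc atomicMGF s p x (a • u + b • v)
      < ∑ i ∈ s, p i * (a • exp (x i * u) + b • exp (x i * v)) :=
        Finset.sum_lt_sum
          (fun i hi => mul_le_mul_of_nonneg_left
            ((convexOn_exp_const_mul (x i)).2 hu hv ha.le hb.le hab) (hp i hi))
          ⟨j, hj, mul_lt_mul_of_pos_left
            ((strictConvexOn_exp_const_mul hxj).2 hu hv huv ha hb hab) hpj⟩
    _ = a • atomicMGF s p x u + b • atomicMGF s p x v := by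
        simp only [atomicMGF, smul_eq_mul, Finset.mul_sum, ← Finset.sum_add_distrib]
        exact Finset.sum_congr rfl fun i _ => by ring

lemma hasDerivAt (s : Finset ι) (p x : ι → ℝ) (θ : ℝ) :
    HasDerivAt (atomicMGF s p x) (∑ i ∈ s, p i * (exp (x i * θ) * x i)) θ :=
  HasDerivAt.fun_sum fun i _ => ((hasDerivAt_const_mul (x i)).exp).const_mul (p i)

lemma tendsto_atTop (hp : ∀ i ∈ s, 0 ≤ p i) (hj : j ∈ s) (hpj : 0 < p j) (hxj : 0 < x j) :
    Tendsto (atomicMGF s p x) atTop atTop := by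
  have hterm : Tendsto (fun θ => p j * exp (x j * θ)) atTop atTop :=
    (tendsto_exp_atTop.comp (tendsto_id.const_mul_atTop hxj)).const_mul_atTop hpj
  refine tendsto_atTop_mono (fun θ => ?_) hterm
  exact Finset.single_le_sum (f := fun i => p i * exp (x i * θ))
    (fun i hi => mul_nonneg (hp i hi) (exp_nonneg _)) hj

theorem existsUnique_pos_eq_sum (hp : ∀ i ∈ s, 0 ≤ p i) (hj : j ∈ s) (hpj : 0 < p j)
    (hxj : 0 < x j) (hmean : ∑ i ∈ s, p i * x i < 0) :
    ∃! θ, 0 < θ ∧ atomicMGF s p x θ = ∑ i ∈ s, p i := by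
  have hconv : StrictConvexOn ℝ (Ici 0) (atomicMGF s p x) :=
    (strictConvexOn hp hj hpj hxj.ne').subset (subset_univ _) (convex_Ici 0)
  have hderiv : HasDerivAt (atomicMGF s p x) (∑ i ∈ s, p i * x i) 0 := by
    simpa only [mul_zero, exp_zero, one_mul] using hasDerivAt s p x 0
  obtain ⟨T, hT, hT0⟩ := (((tendsto_atTop hp hj hpj hxj).eventually_ge_atTop
    (atomicMGF s p x 0)).and (eventually_gt_atTop 0)).exists
  rw [← apply_zero s p x]
  exact existsUnique_gt_eq_of_strictConvexOn hconv hderiv.hasDerivWithinAt hmean hT0 hT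

end atomicMGF

lemma exp_mul_bernoulli_eq_atomicMGF (lam γ θ : ℝ) :
    exp (lam * θ) * (γ * exp (-θ) + 1 - γ) =
      atomicMGF Finset.univ ![γ, 1 - γ] ![lam - 1, lam] θ := by
  have hexp : exp ((lam - 1) * θ) = exp (lam * θ) * exp (-θ) := by
    rw [← exp_add]
    ring_nf
  simp only [atomicMGF, Fin.sum_univ_two, Matrix.cons_val_zero, Matrix.cons_val_one, hexp]
  ring

/-- For `0 < λ < γ < 1`, the Lundberg equation `e^{λθ}(γe^{−θ} + 1 − γ) = 1` has exactly
one positive solution `θ = η`. -/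
theorem statement11 (lam γ : ℝ) (hlam : 0 < lam) (hlt : lam < γ) (hγ : γ < 1) :
    ∃! θ : ℝ, 0 < θ ∧ Real.exp (lam * θ) * (γ * Real.exp (-θ) + 1 - γ) = 1 := by
  have hmass : ∑ i, ![γ, 1 - γ] i = 1 := by simp [Fin.sum_univ_two]
  have hnonneg : ∀ i ∈ Finset.univ, 0 ≤ ![γ, 1 - γ] i := by
    simp [Fin.forall_fin_two, (hlam.trans hlt).le, hγ.le]
  have hmean : ∑ i, ![γ, 1 - γ] i * ![lam - 1, lam] i < 0 := by
    simp only [Fin.sum_univ_two, Matrix.cons_val_zero, Matrix.cons_val_one]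
    linarith
  simp only [exp_mul_bernoulli_eq_atomicMGF]
  simpa only [hmass] using
    atomicMGF.existsUnique_pos_eq_sum hnonneg (Finset.mem_univ 1) (sub_pos.2 hγ) hlam hmean
end
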